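/- arXiv:1506.02806 — 2 statements merged into one kernel-verified Lean document; each statement's English description precedes it below -/
import Mathlib

section
/- Let p be a prime, s a positive integer, q = p^s, n ≥ 2, and m = (n-1)q + 1. Then there exists an injective group homomorphism φ from UT_n(F_p) into UT_m(F_p) such that every element of UT_n(F_p) has a q-th root in UT_m(F_p) with respect to φ; that is, for every a ∈ UT_n(F_p) there exists x ∈ UT_m(F_p) with x^q = φ(a). -/
open Matrix

/-- An `n × n` matrix is *unitriangular* if it is upper triangular with all
diagonal entries equal to `1`. -/
def IsUnitriangular {n : ℕ} {R : Type*} [CommRing R]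
    (M : Matrix (Fin n) (Fin n) R) : Prop :=
  M.BlockTriangular id ∧ ∀ i, M i i = 1

lemma isUnitriangular_one {n : ℕ} {R : Type*} [CommRing R] :
    IsUnitriangular (1 : Matrix (Fin n) (Fin n) R) :=
  ⟨blockTriangular_one, fun i => by simp⟩

lemma IsUnitriangular.mul {n : ℕ} {R : Type*} [CommRing R]
    {A B : Matrix (Fin n) (Fin n) R} (hA : IsUnitriangular A)
    (hB : IsUnitriangular B) : IsUnitriangular (A * B) := by
  refine ⟨hA.1.mul hB.1, fun i => ?_⟩
  rw [mul_apply, Finset.sum_eq_single i]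
  · rw [hA.2, hB.2, one_mul]
  · intro j _ hj
    rcases lt_or_gt_of_ne hj with h | h
    · rw [hA.1 (show id j < id i from h), zero_mul]
    · rw [hB.1 (show id i < id j from h), mul_zero]
  · intro h; exact absurd (Finset.mem_univ i) h

/-- The group `UT_n(F_p)` of upper unitriangular `n × n` matrices over the field
`F_p = ZMod p`, realized as a subgroup of the group of units of the matrix ring. -/
def UT (p n : ℕ) [Fact p.Prime] : Subgroup (Matrix (Fin n) (Fin n) (ZMod p))ˣ where
  carrier := {M | IsUnitriangular (M : Matrix (Fin n) (Fin n) (ZMod p))}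
  one_mem' := isUnitriangular_one
  mul_mem' := fun ha hb => ha.mul hb
  inv_mem' := by
    intro x hx
    have hpow : ∀ k : ℕ,
        IsUnitriangular ((x ^ k : (Matrix (Fin n) (Fin n) (ZMod p))ˣ) :
          Matrix (Fin n) (Fin n) (ZMod p)) := by
      intro k
      induction k with
      | zero => simpa using isUnitriangular_one
      | succ k ih => rw [pow_succ, Units.val_mul]; exact ih.mul hx
    have hinv : x⁻¹ = x ^ (orderOf x - 1) := by
      refine inv_eq_of_mul_eq_one_right ?_
      rw [← pow_succ', Nat.sub_add_cancel (orderOf_pos x)]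
      exact pow_orderOf_eq_one x
    show IsUnitriangular ((x⁻¹ : (Matrix (Fin n) (Fin n) (ZMod p))ˣ) :
      Matrix (Fin n) (Fin n) (ZMod p))
    rw [hinv]
    exact hpow _

open scoped Kronecker

section Corner

variable {R : Type*} [CommRing R] {m n q : ℕ}

/-- The first `m` elements of `Fin n × Fin q` in lexicographic order. -/
def lexInitial (h : m ≤ n * q) (k : Fin m) : Fin n × Fin q :=
  finProdFinEquiv.symm (Fin.castLE h k)

/-- The upper left `m × m` corner of a matrix indexed by `Fin n × Fin q`, ordered
lexicographically. -/
def corner (h : m ≤ n * q) (B : Matrix (Fin n × Fin q) (Fin n × Fin q) R) :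
    Matrix (Fin m) (Fin m) R :=
  B.submatrix (lexInitial h) (lexInitial h)

lemma lexInitial_injective (h : m ≤ n * q) : Function.Injective (lexInitial h) :=
  finProdFinEquiv.symm.injective.comp (Fin.castLE_injective h)

lemma corner_one (h : m ≤ n * q) :
    corner h (1 : Matrix (Fin n × Fin q) (Fin n × Fin q) R) = 1 :=
  submatrix_one _ (lexInitial_injective h)

lemma corner_mul (h : m ≤ n * q) (B : Matrix (Fin n × Fin q) (Fin n × Fin q) R)
    {C : Matrix (Fin n × Fin q) (Fin n × Fin q) R} (hC : C.BlockTriangular finProdFinEquiv) :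
    corner h (B * C) = corner h B * corner h C := by
  ext k l
  simp only [corner, submatrix_apply, mul_apply]
  refine (Fintype.sum_of_injective _ (lexInitial_injective h) _ _ ?_
    fun _ => rfl).symm
  intro x hx
  rw [hC, mul_zero]
  rw [lexInitial, Equiv.apply_symm_apply]
  by_contra hlt
  have hx' : (finProdFinEquiv x : ℕ) ≤ l := not_lt.mp hlt
  exact hx ⟨⟨finProdFinEquiv x, hx'.trans_lt l.2⟩,
    finProdFinEquiv.symm_apply_eq.mpr (Fin.ext rfl)⟩

lemma corner_pow (h : m ≤ n * q) {B : Matrix (Fin n × Fin q) (Fin n × Fin q) R}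
    (hB : B.BlockTriangular finProdFinEquiv) (k : ℕ) : corner h (B ^ k) = corner h B ^ k := by
  induction k with
  | zero => simp [corner_one]
  | succ k ih => rw [pow_succ, pow_succ, corner_mul h _ hB, ih]

lemma isUnitriangular_corner (h : m ≤ n * q)
    {B : Matrix (Fin n × Fin q) (Fin n × Fin q) R} (hB : B.BlockTriangular finProdFinEquiv)
    (hdiag : ∀ x, B x x = 1) : IsUnitriangular (corner h B) := by
  refine ⟨fun k l hlk => hB ?_, fun k => hdiag _⟩
  rw [lexInitial, lexInitial, Equiv.apply_symm_apply, Equiv.apply_symm_apply]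
  exact hlk

end Corner

section Root

variable {R : Type*} [CommRing R] {n q : ℕ}

lemma blockTriangular_kronecker_one {A : Matrix (Fin n) (Fin n) R}
    (hA : A.BlockTriangular id) :
    (A ⊗ₖ (1 : Matrix (Fin q) (Fin q) R)).BlockTriangular finProdFinEquiv := by
  rintro ⟨i, j⟩ ⟨i', j'⟩ hlt
  rw [kronecker_apply]
  by_cases hj : j = j'
  · subst hj
    rw [hA, zero_mul]
    have hlt' : j.val + q * i' < j.val + q * i := hlt
    exact Fin.lt_def.mpr (Nat.lt_of_mul_lt_mul_left (Nat.add_lt_add_iff_left.mp hlt'))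
  · rw [one_apply_ne hj, mul_zero]

/-- The `k`-th power (for `k ≤ q`, see `rootMatrix_one_pow`) of the block companion matrix of
`t ^ q - A`; it interpolates between `1` at `k = 0` and `A ⊗ₖ 1` at `k = q`. -/
def rootMatrix (q : ℕ) (A : Matrix (Fin n) (Fin n) R) (k : ℕ) :
    Matrix (Fin n × Fin q) (Fin n × Fin q) R :=
  .of fun x y =>
    if x.2.val + k = y.2 then (1 : Matrix (Fin n) (Fin n) R) x.1 y.1
    else if x.2.val + k = y.2 + q then A x.1 y.1 else 0

lemma rootMatrix_zero (A : Matrix (Fin n) (Fin n) R) : rootMatrix q A 0 = 1 := by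
  ext ⟨i, j⟩ ⟨i', j'⟩
  have hj : j.val ≠ j' + q := by omega
  simp only [rootMatrix, of_apply, add_zero, hj, one_apply, Prod.mk.injEq, Fin.ext_iff]
  grind

lemma rootMatrix_self (A : Matrix (Fin n) (Fin n) R) :
    rootMatrix q A q = A ⊗ₖ (1 : Matrix (Fin q) (Fin q) R) := by
  ext ⟨i, j⟩ ⟨i', j'⟩
  have hj : j.val + q ≠ j' := by omega
  simp [rootMatrix, hj, one_apply, Fin.ext_iff]

lemma rootMatrix_one_mul (A : Matrix (Fin n) (Fin n) R) {k : ℕ} (hk : k < q) :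
    rootMatrix q A 1 * rootMatrix q A k = rootMatrix q A (k + 1) := by
  ext ⟨i, j⟩ ⟨i', j'⟩
  rw [mul_apply, Fintype.sum_prod_type]
  by_cases hj : j.val + 1 < q
  · rw [Finset.sum_eq_single i, Finset.sum_eq_single ⟨j + 1, hj⟩]
    · simp [rootMatrix, add_assoc, add_comm 1 k]
    · intro b _ hb
      have h1 : j.val + 1 ≠ b := fun h => hb (Fin.ext h.symm)
      have h2 : j.val + 1 ≠ b + q := by omega
      simp [rootMatrix, h1, h2]
    · simp
    · intro a _ ha
      refine Finset.sum_eq_zero fun b _ => ?_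
      have h2 : j.val + 1 ≠ b + q := by omega
      simp [rootMatrix, h2, one_apply_ne ha.symm]
    · simp
  · have hq : j.val + 1 = q := by omega
    have hrow (a : Fin n) : ∑ b : Fin q, rootMatrix q A 1 (i, j) (a, b) *
        rootMatrix q A k (a, b) (i', j') =
        A i a * if k = j' then (1 : Matrix (Fin n) (Fin n) R) a i' else 0 := by
      rw [Finset.sum_eq_single ⟨0, by omega⟩]
      · have h1 : k ≠ j' + q := by omega
        have h2 : q ≠ 0 := by omega
        simp [rootMatrix, hq, h1, h2]
      · intro b _ hb
        have h1 : q ≠ b := by omega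
        have h2 : b.val ≠ 0 := fun h => hb (Fin.ext h)
        simp [rootMatrix, hq, h1, h2]
      · simp
    simp only [hrow]
    have h1 : j.val + (k + 1) ≠ j' := by omega
    have h2 : j.val + (k + 1) = j' + q ↔ k = j' := by omega
    simp only [rootMatrix, of_apply, h1, h2, if_false]
    split_ifs
    · rw [← mul_apply, mul_one]
    · simp

lemma rootMatrix_one_pow (A : Matrix (Fin n) (Fin n) R) {k : ℕ} (hk : k ≤ q) :
    rootMatrix q A 1 ^ k = rootMatrix q A k := by
  induction k with
  | zero => rw [pow_zero, rootMatrix_zero]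
  | succ k ih => rw [pow_succ', ih (by omega), rootMatrix_one_mul A hk]

lemma rootMatrix_one_apply_eq_zero {A : Matrix (Fin n) (Fin n) R}
    (hA : ∀ i j, j ≤ i → A i j = 0) {x y : Fin n × Fin q}
    (hxy : finProdFinEquiv y ≤ finProdFinEquiv x) : rootMatrix q A 1 x y = 0 := by
  obtain ⟨i, j⟩ := x
  obtain ⟨i', j'⟩ := y
  have hle : j'.val + q * i' ≤ j.val + q * i := hxy
  simp only [rootMatrix, of_apply]
  split_ifs with h1 h2
  · refine one_apply_ne fun hi : i = i' => ?_
    subst hi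
    omega
  · refine hA _ _ (not_lt.mp fun hlt => ?_)
    have hmul : q * (i.val + 1) ≤ q * i' := Nat.mul_le_mul_left q hlt
    rw [mul_add] at hmul
    omega
  · rfl

/-- If `a` is unitriangular over a ring of characteristic `p`, then `a ⊗ₖ 1` has a
unitriangular `p ^ s`-th root. -/
lemma exists_pow_eq_kronecker_one {p : ℕ} [Fact p.Prime] [CharP R p] (s : ℕ)
    {a : Matrix (Fin n) (Fin n) R} (ha : IsUnitriangular a) :
    ∃ X : Matrix (Fin n × Fin (p ^ s)) (Fin n × Fin (p ^ s)) R,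
      X.BlockTriangular finProdFinEquiv ∧ (∀ x, X x x = 1) ∧
        X ^ p ^ s = a ⊗ₖ (1 : Matrix (Fin (p ^ s)) (Fin (p ^ s)) R) := by
  have hA : ∀ i j, j ≤ i → (a - 1) i j = 0 := by
    intro i j hji
    rcases hji.eq_or_lt with rfl | hlt
    · simp [ha.2]
    · rw [Matrix.sub_apply, ha.1 hlt, one_apply_ne hlt.ne', sub_zero]
  refine ⟨1 + rootMatrix _ (a - 1) 1, ?_, fun x => ?_, ?_⟩
  · exact blockTriangular_one.add fun x y hxy => rootMatrix_one_apply_eq_zero hA hxy.le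
  · rw [Matrix.add_apply, rootMatrix_one_apply_eq_zero hA le_rfl, one_apply_eq, add_zero]
  · rcases isEmpty_or_nonempty (Fin n) with hn | hn
    · exact Subsingleton.elim _ _
    have : Nonempty (Fin (p ^ s)) := ⟨⟨0, pow_pos (Fact.out : p.Prime).pos s⟩⟩
    rw [add_pow_char_pow_of_commute _ _ (Commute.one_left _), one_pow,
      rootMatrix_one_pow _ le_rfl, rootMatrix_self, ← one_kronecker_one, ← add_kronecker,
      add_sub_cancel]

end Root

/-- Adjunction of `p^s`-th roots: `UT_n(F_p)` embeds in `UT_m(F_p)`, `m = (n-1)p^s + 1`,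
so that every element of `UT_n(F_p)` acquires a `p^s`-th root. -/
theorem simultaneous_adjunction_of_roots (p s n : ℕ) [Fact p.Prime]
    (hs : 0 < s) (hn : 2 ≤ n) :
    ∃ φ : UT p n →* UT p ((n - 1) * p ^ s + 1),
      Function.Injective φ ∧
        ∀ a : UT p n, ∃ x : UT p ((n - 1) * p ^ s + 1), x ^ p ^ s = φ a := by
  have hq : 0 < p ^ s := pow_pos (Fact.out : p.Prime).pos s
  have h : (n - 1) * p ^ s + 1 ≤ n * p ^ s := by
    obtain ⟨k, rfl⟩ : ∃ k, n = k + 1 := ⟨n - 1, by omega⟩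
    rw [Nat.add_sub_cancel, add_mul, one_mul]
    omega
  let blowUp (a : UT p n) : Matrix (Fin n × Fin (p ^ s)) (Fin n × Fin (p ^ s)) (ZMod p) :=
    a.val.val ⊗ₖ 1
  have hblow (a : UT p n) : (blowUp a).BlockTriangular finProdFinEquiv :=
    blockTriangular_kronecker_one a.2.1
  let ψ : UT p n →* Matrix (Fin ((n - 1) * p ^ s + 1)) (Fin ((n - 1) * p ^ s + 1)) (ZMod p) :=
    { toFun := fun a => corner h (blowUp a)
      map_one' := by simp [blowUp, corner_one]
      map_mul' := fun a b => by
        rw [← corner_mul h _ (hblow b)]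
        simp [blowUp, ← mul_kronecker_mul] }
  have hψ (a : UT p n) : IsUnitriangular (ψ a) :=
    isUnitriangular_corner h (hblow a) fun x => by simp [blowUp, a.2.2 x.1]
  refine ⟨ψ.toHomUnits.codRestrict (UT p _) hψ, fun a b hab => ?_, fun a => ?_⟩
  · have hab' : ψ a = ψ b := congrArg (fun u => u.val.val) hab
    refine Subtype.ext (Units.ext (Matrix.ext fun i j => ?_))
    have hlex (i : Fin n) : ∃ k, lexInitial h k = (i, ⟨0, hq⟩) := by
      have hi : p ^ s * i.val ≤ (n - 1) * p ^ s := by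
        rw [mul_comm]
        exact Nat.mul_le_mul_right _ (by omega)
      refine ⟨⟨p ^ s * i, by omega⟩, finProdFinEquiv.symm_apply_eq.mpr (Fin.ext ?_)⟩
      simp
    obtain ⟨k, hk⟩ := hlex i
    obtain ⟨l, hl⟩ := hlex j
    simpa [ψ, corner, blowUp, hk, hl] using congrFun₂ hab' k l
  · obtain ⟨X, hX, hdiag, hpow⟩ := exists_pow_eq_kronecker_one s a.2
    have hroot : corner h X ^ p ^ s = ψ.toHomUnits a := by
      rw [← corner_pow h hX, hpow]
      rfl
    obtain ⟨u, hu⟩ := (isUnit_pow_iff hq.ne').mp (hroot ▸ (ψ.toHomUnits a).isUnit)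
    have hu_mem : u ∈ UT p ((n - 1) * p ^ s + 1) := by
      change IsUnitriangular u.val
      rw [hu]
      exact isUnitriangular_corner h hX hdiag
    refine ⟨⟨u, hu_mem⟩, Subtype.ext (Units.ext ?_)⟩
    change (u ^ p ^ s).val = _
    rw [Units.val_pow_eq_pow_val, hu, hroot]
    rfl
end

section
/- Let p be a prime, s a positive integer, q = p^s, n ≥ 2, and m = (n-1)q + 1. Then the wreath product UT_n(F_p) ≀ C_q of the unitriangular group UT_n(F_p) with the cyclic group C_q of order q embeds in UT_m(F_p); that is, there exists an injective group homomorphism from UT_n(F_p) ≀ C_q into UT_m(F_p). -/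
open Matrix

/-- The cyclic shift automorphism of the base group `ZMod q → G`:
`(f^c)(t) = f (t - c)`. -/
def shiftAut (q : ℕ) (G : Type*) [Group G] (c : ZMod q) : MulAut (ZMod q → G) where
  toFun f := fun t => f (t - c)
  invFun f := fun t => f (t + c)
  left_inv f := by funext t; simp
  right_inv f := by funext t; simp
  map_mul' f g := rfl

/-- The action of the cyclic group `C_q = ZMod q` on the base group `ZMod q → G`
by cyclic shifts. -/
def shiftHom (q : ℕ) (G : Type*) [Group G] :
    Multiplicative (ZMod q) →* MulAut (ZMod q → G) where
  toFun c := shiftAut q G c.toAdd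
  map_one' := by
    refine MulEquiv.ext fun f => funext fun t => ?_
    simp [shiftAut]
  map_mul' c d := by
    refine MulEquiv.ext fun f => funext fun t => ?_
    simp [shiftAut, MulAut.mul_apply, sub_sub]

/-- The wreath product `G ≀ C_q` of a group `G` with the cyclic group of order `q`. -/
abbrev WreathCyclic (G : Type*) [Group G] (q : ℕ) :=
  (ZMod q → G) ⋊[shiftHom q G] Multiplicative (ZMod q)

/-- The diagonal embedding of `G` into the base group of `G ≀ C_q`. -/
def diagEmbed (G : Type*) [Group G] (q : ℕ) : G →* WreathCyclic G q :=
  SemidirectProduct.inl.comp (Pi.constMonoidHom (ZMod q) G)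

/-- A nonzero representation of a `p`-group in characteristic `p` has a nonzero fixed vector. -/
lemma exists_ne_zero_fixed_of_isPGroup {p : ℕ} [Fact p.Prime] {G V : Type*} [Group G]
    [AddCommGroup V] [Module (ZMod p) V] [Module.Finite (ZMod p) V] [Nontrivial V]
    (hG : IsPGroup p G) (ρ : Representation (ZMod p) G V) :
    ∃ w : V, w ≠ 0 ∧ ∀ g, ρ g w = w := by
  let _ : MulAction G V := MulAction.compHom V ρ
  have : Finite V := Module.finite_of_finite (ZMod p)
  have hcard : p ∣ Nat.card V := by
    rw [Module.natCard_eq_pow_finrank (K := ZMod p), Nat.card_zmod]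
    exact dvd_pow_self p Module.finrank_pos.ne'
  obtain ⟨w, hw, hne⟩ := hG.exists_fixed_point_of_prime_dvd_card_of_fixed_point V hcard
    (a := 0) (fun g => map_zero (ρ g))
  exact ⟨w, hne.symm, hw⟩

/-- A representation of a `p`-group in characteristic `p` is unitriangular in a suitable basis. -/
lemma exists_basis_isUnitriangular_of_isPGroup {p : ℕ} [Fact p.Prime] {G : Type*} [Group G]
    (hG : IsPGroup p G) (m : ℕ) {V : Type*} [AddCommGroup V] [Module (ZMod p) V]
    [Module.Finite (ZMod p) V] (ρ : Representation (ZMod p) G V)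
    (hm : Module.finrank (ZMod p) V = m) :
    ∃ b : Module.Basis (Fin m) (ZMod p) V, ∀ g, IsUnitriangular (LinearMap.toMatrix b b (ρ g)) := by
  induction m generalizing V with
  | zero =>
    exact ⟨Module.finBasisOfFinrankEq _ _ hm, fun g => ⟨fun i => i.elim0, fun i => i.elim0⟩⟩
  | succ m ih =>
    have : Nontrivial V := Module.nontrivial_of_finrank_pos (R := ZMod p) (by omega)
    obtain ⟨w, hw, hfix⟩ := exists_ne_zero_fixed_of_isPGroup hG ρ
    let W := Submodule.span (ZMod p) {w}
    have hW : ∀ g, W ≤ W.comap (ρ g) := fun g => by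
      rw [Submodule.span_le, Set.singleton_subset_iff]
      simp [hfix, W]
    have hQ : Module.finrank (ZMod p) (V ⧸ W) = m := by
      have := Submodule.finrank_quotient_add_finrank W
      rw [finrank_span_singleton hw, hm] at this
      exact Nat.add_right_cancel this
    obtain ⟨bQ, hbQ⟩ := ih (ρ.quotient W hW) hQ
    let bW : Module.Basis Unit (ZMod p) W :=
      (Module.Basis.singleton Unit (ZMod p)).map
        (LinearEquiv.toSpanNonzeroSingleton (ZMod p) V w hw)
    have hbW : (bW () : V) = w := by
      rw [Module.Basis.map_apply, Module.Basis.singleton_apply]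
      exact one_smul (ZMod p) w
    let b := Module.Basis.sumQuot bW bQ
    let e : Unit ⊕ Fin m ≃ Fin (m + 1) :=
      ((Equiv.sumComm _ _).trans (Equiv.optionEquivSumPUnit _).symm).trans (finSuccEquiv m).symm
    have e0 : e.symm 0 = Sum.inl () := rfl
    have es (i : Fin m) : e.symm i.succ = Sum.inr i := by simp [e]
    have hcol (g : G) (i : Fin (m + 1)) :
        LinearMap.toMatrix (b.reindex e) (b.reindex e) (ρ g) i 0 = if i = 0 then 1 else 0 := by
      rw [LinearMap.toMatrix_apply, Module.Basis.reindex_apply, e0, Module.Basis.sumQuot_inl, hbW,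
        hfix, ← hbW, Module.Basis.repr_reindex_apply, Module.Basis.sumQuot_repr_left]
      refine Fin.cases ?_ (fun i => ?_) i
      · simp [e0]
      · simp [es]
    have hblock (g : G) (i j : Fin m) :
        LinearMap.toMatrix (b.reindex e) (b.reindex e) (ρ g) i.succ j.succ =
          LinearMap.toMatrix bQ bQ (ρ.quotient W hW g) i j := by
      rw [LinearMap.toMatrix_apply, LinearMap.toMatrix_apply, Module.Basis.reindex_apply, es,
        Module.Basis.repr_reindex_apply, es, Module.Basis.sumQuot_repr_inr,
        ← Module.Basis.sumQuot_inr bW bQ j]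
      rfl
    refine ⟨b.reindex e, fun g => ⟨fun i j hij => ?_, fun i => ?_⟩⟩
    · induction j using Fin.cases with
      | zero => rw [hcol]; exact if_neg hij.ne'
      | succ j =>
        induction i using Fin.cases with
        | zero => exact absurd hij (Fin.not_lt_zero _)
        | succ i => rw [hblock]; exact (hbQ g).1 (Fin.succ_lt_succ_iff.1 hij)
    · induction i using Fin.cases with
      | zero => rw [hcol, if_pos rfl]
      | succ i => rw [hblock]; exact (hbQ g).2 i

/-- A `p`-group with a faithful `m`-dimensional representation over `F_p` embeds in `UT_m(F_p)`. -/
lemma exists_injective_hom_UT_of_isPGroup {p m : ℕ} [Fact p.Prime] {G V : Type*} [Group G]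
    [AddCommGroup V] [Module (ZMod p) V] [Module.Finite (ZMod p) V]
    (hG : IsPGroup p G) (ρ : Representation (ZMod p) G V) (hρ : Function.Injective ρ)
    (hm : Module.finrank (ZMod p) V = m) :
    ∃ τ : G →* UT p m, Function.Injective τ := by
  obtain ⟨b, hb⟩ := exists_basis_isUnitriangular_of_isPGroup hG m ρ hm
  let σ : G →* Matrix (Fin m) (Fin m) (ZMod p) :=
    (LinearMap.toMatrixAlgEquiv b : Module.End (ZMod p) V →* _).comp ρ
  refine ⟨σ.toHomUnits.codRestrict (UT p m) hb, fun g h hgh => hρ ?_⟩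
  exact (LinearMap.toMatrixAlgEquiv b).injective
    (congrArg (fun x : UT p m => (x.1 : Matrix (Fin m) (Fin m) (ZMod p))) hgh)

lemma UT.pow_prime_pow_eq_one {p n : ℕ} [Fact p.Prime] (x : UT p n) : x ^ p ^ n = 1 := by
  obtain ⟨x, hx⟩ := x
  have hnil : ((x : Matrix (Fin n) (Fin n) (ZMod p)) - 1) ^ n = 0 := by
    have h := Matrix.aeval_self_charpoly (x : Matrix (Fin n) (Fin n) (ZMod p))
    rw [Matrix.charpoly_of_isUpperTriangular _ hx.1] at h
    simpa [hx.2] using h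
  cases n with
  | zero => exact Subsingleton.elim _ _
  | succ n =>
    refine Subtype.ext (Units.ext ?_)
    have h := pow_eq_zero_of_le (Nat.lt_pow_self (Fact.out : p.Prime).one_lt).le hnil
    rw [sub_pow_char_pow_of_commute p _ (Commute.one_right _), one_pow, sub_eq_zero] at h
    simpa using h

lemma isPGroup_wreathCyclic_UT (p s n : ℕ) [Fact p.Prime] :
    IsPGroup p (WreathCyclic (UT p n) (p ^ s)) := by
  rw [isPGroup_iff_pow_pow_eq_one]
  intro x
  refine ⟨s + n, ?_⟩
  have hright : SemidirectProduct.rightHom (x ^ p ^ s) = 1 := by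
    rw [map_pow]
    refine Multiplicative.toAdd.injective ?_
    rw [toAdd_pow, toAdd_one, nsmul_eq_mul, ZMod.natCast_self, zero_mul]
  obtain ⟨f, hf⟩ : x ^ p ^ s ∈ (SemidirectProduct.inl (φ := shiftHom (p ^ s) (UT p n))).range := by
    rw [SemidirectProduct.range_inl_eq_ker_rightHom]
    exact hright
  rw [pow_add, pow_mul, ← hf, ← map_pow,
    show f ^ p ^ n = 1 from funext fun t => UT.pow_prime_pow_eq_one (f t), map_one]

/-- The last coordinate of a vector is unchanged by a unitriangular matrix. -/
lemma IsUnitriangular.mulVec_last {k : ℕ} {R : Type*} [CommRing R]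
    {A : Matrix (Fin (k + 1)) (Fin (k + 1)) R} (hA : IsUnitriangular A) (v : Fin (k + 1) → R) :
    (A *ᵥ v) (Fin.last k) = v (Fin.last k) := by
  rw [mulVec, dotProduct, Finset.sum_eq_single (Fin.last k)]
  · rw [hA.2, one_mul]
  · intro j _ hj
    rw [hA.1 (show id j < id (Fin.last k) from Fin.lt_last_iff_ne_last.2 hj), zero_mul]
  · intro h; exact absurd (Finset.mem_univ _) h

/-- The imprimitive representation of `UT_n(F_p) ≀ C_q` on `(F_p^n)^q`. -/
def wreathRep (p n q : ℕ) [Fact p.Prime] :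
    Representation (ZMod p) (WreathCyclic (UT p n) q) (ZMod q → Fin n → ZMod p) where
  toFun g :=
    { toFun v t := ((g.left t).1 : Matrix (Fin n) (Fin n) (ZMod p)) *ᵥ v (t - g.right.toAdd)
      map_add' _ _ := funext fun _ => mulVec_add _ _ _
      map_smul' c v := funext fun t => mulVec_smul _ c (v _) }
  map_one' := by
    refine LinearMap.ext fun v => funext fun t => ?_
    simp
  map_mul' g h := by
    refine LinearMap.ext fun v => funext fun t => ?_
    simp [shiftHom, shiftAut, sub_sub]

lemma wreathRep_apply {p n q : ℕ} [Fact p.Prime] (g : WreathCyclic (UT p n) q)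
    (v : ZMod q → Fin n → ZMod p) (t : ZMod q) :
    wreathRep p n q g v t =
      ((g.left t).1 : Matrix (Fin n) (Fin n) (ZMod p)) *ᵥ v (t - g.right.toAdd) := rfl

/-- The families of vectors `v t` whose last coordinate does not depend on `t`. -/
def constLast (F : Type*) [Field F] (k q : ℕ) : Submodule F (ZMod q → Fin (k + 1) → F) where
  carrier := {v | ∀ t, v t (Fin.last k) = v 0 (Fin.last k)}
  zero_mem' _ := rfl
  add_mem' hv hw t := by simp [hv t, hw t]
  smul_mem' c v hv t := by simp [hv t]

/-- An element of `constLast` consists of the truncated vectors and the common last coordinate. -/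
def constLastEquiv (F : Type*) [Field F] (k q : ℕ) :
    constLast F k q ≃ₗ[F] (ZMod q → Fin k → F) × F where
  toFun v := (fun t i => v.1 t i.castSucc, v.1 0 (Fin.last k))
  map_add' _ _ := rfl
  map_smul' _ _ := rfl
  invFun u := ⟨fun t => Fin.snoc (u.1 t) u.2, fun t => by simp⟩
  left_inv v := by
    refine Subtype.ext (funext fun t => funext fun i => ?_)
    refine Fin.lastCases ?_ (fun i => ?_) i
    · simpa using (v.2 t).symm
    · simp
  right_inv u := by simp

lemma finrank_constLast (F : Type*) [Field F] (k q : ℕ) [NeZero q] :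
    Module.finrank F (constLast F k q) = k * q + 1 := by
  rw [(constLastEquiv F k q).finrank_eq, Module.finrank_prod, Module.finrank_pi_fintype]
  simp [ZMod.card, mul_comm]

lemma constLast_le_comap_wreathRep (p k q : ℕ) [Fact p.Prime]
    (g : WreathCyclic (UT p (k + 1)) q) :
    constLast (ZMod p) k q ≤ (constLast (ZMod p) k q).comap (wreathRep p (k + 1) q g) := by
  intro v hv t
  rw [wreathRep_apply, wreathRep_apply, IsUnitriangular.mulVec_last (g.left _).2,
    IsUnitriangular.mulVec_last (g.left _).2, hv (t - _), hv (0 - _)]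

lemma wreathRep_subrepresentation_injective (p k q : ℕ) [Fact p.Prime] (hk : 0 < k) :
    Function.Injective ((wreathRep p (k + 1) q).subrepresentation (constLast (ZMod p) k q)
      (constLast_le_comap_wreathRep p k q)) := by
  rw [injective_iff_map_eq_one]
  intro g hg
  have hfix (v) (hv : v ∈ constLast (ZMod p) k q) (t : ZMod q) :
      ((g.left t).1 : Matrix _ _ (ZMod p)) *ᵥ v (t - g.right.toAdd) = v t :=
    congrFun (congrArg Subtype.val (LinearMap.congr_fun hg ⟨v, hv⟩)) t
  have hright : g.right.toAdd = 0 := by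
    by_contra hc
    have : NeZero k := ⟨hk.ne'⟩
    let i : Fin (k + 1) := (0 : Fin k).castSucc
    have h := hfix (Pi.single 0 (Pi.single i 1)) (fun t => by
      have hi : Fin.last k ≠ i := (Fin.castSucc_lt_last _).ne'
      by_cases ht : t = 0 <;> simp [ht, hi]) 0
    rw [Pi.single_eq_of_ne (by simpa using hc), mulVec_zero, Pi.single_eq_same] at h
    simpa using congrFun h i
  refine SemidirectProduct.ext (funext fun t => Subtype.ext (Units.ext ?_)) hright
  refine Matrix.ext_of_mulVec_single fun i => ?_
  exact (hfix (fun _ => Pi.single i 1) (fun _ => rfl) t).trans (one_mulVec _).symm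

/-- The wreath product `UT_n(F_p) ≀ C_{p^s}` embeds in `UT_m(F_p)`, `m = (n-1)p^s + 1`. -/
theorem wreath_product_embeds (p s n : ℕ) [Fact p.Prime] (hs : 0 < s) (hn : 2 ≤ n) :
    ∃ τ : WreathCyclic (UT p n) (p ^ s) →* UT p ((n - 1) * p ^ s + 1),
      Function.Injective τ := by
  obtain ⟨k, rfl⟩ : ∃ k, n = k + 1 := ⟨n - 1, by omega⟩
  exact exists_injective_hom_UT_of_isPGroup (isPGroup_wreathCyclic_UT p s (k + 1)) _
    (wreathRep_subrepresentation_injective p k (p ^ s) (by omega))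
    (finrank_constLast (ZMod p) k (p ^ s))
end
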